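/- arXiv:1501.03377 — 2 statements merged into one kernel-verified Lean document; each statement's English description precedes it below -/
import Mathlib

section
/- For every integer n ≥ 1, there exists a group homomorphism φ from the symmetric group Sym(3) to the automorphism group of (ℤ/nℤ) × (ℤ/nℤ) such that the Fermat group G_n is isomorphic to the semidirect product ((ℤ/nℤ) × (ℤ/nℤ)) ⋊_φ Sym(3). -/
namespace RegularMap

variable {G : Type*} [Group G]

/-- The vertex set of the map: left cosets of the cyclic subgroup generated by `y`. -/
abbrev Vertex (y : G) : Type _ := G ⧸ Subgroup.zpowers y

/-- The rotation about the vertex `v = g⟨y⟩`, namely `g * y * g⁻¹`. -/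
def rot (y : G) (v : Vertex y) : G :=
  Quotient.liftOn' v (fun g => g * y * g⁻¹) (by
    intro a b h
    obtain ⟨k, hk⟩ := QuotientGroup.leftRel_apply.mp h
    have hk' : y ^ k = a⁻¹ * b := hk
    have hb : b = a * y ^ k := by rw [hk']; group
    subst hb
    group)

/-- Two vertices are adjacent iff they are distinct and form the endpoint pair of
some edge `g⟨x*y⟩`, whose endpoints are `g⟨y⟩` and `g*x*y⟨y⟩`. -/
def Adj (x y : G) (v w : Vertex y) : Prop :=
  v ≠ w ∧ ∃ g : G,
    ({v, w} : Set (Vertex y)) = {QuotientGroup.mk g, QuotientGroup.mk (g * x * y)}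

/-- The map is simple: no edge has equal endpoints, and distinct edges (left cosets
of `⟨x*y⟩`) have distinct endpoint pairs. -/
def IsSimple (x y : G) : Prop :=
  (∀ g : G, (QuotientGroup.mk g : Vertex y) ≠ QuotientGroup.mk (g * x * y)) ∧
  ∀ g h : G,
    ({QuotientGroup.mk g, QuotientGroup.mk (g * x * y)} : Set (Vertex y)) =
      {QuotientGroup.mk h, QuotientGroup.mk (h * x * y)} →
    (QuotientGroup.mk g : G ⧸ Subgroup.zpowers (x * y)) = QuotientGroup.mk h

/-- The map is reflexive: some group automorphism inverts both `x` and `y`. -/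
def IsReflexive (x y : G) : Prop :=
  ∃ σ : G ≃* G, σ x = x⁻¹ ∧ σ y = y⁻¹

/-- An automorphism of the map (given a reflection σ): either orientation preserving,
`g⟨y⟩ ↦ a*g⟨y⟩`, or orientation reversing, `g⟨y⟩ ↦ a*σ(g)⟨y⟩`. -/
def IsMapAut (y : G) (σ : G ≃* G) (φ : Vertex y → Vertex y) : Prop :=
  (∃ a : G, ∀ g : G, φ (QuotientGroup.mk g) = QuotientGroup.mk (a * g)) ∨
  (∃ a : G, ∀ g : G, φ (QuotientGroup.mk g) = QuotientGroup.mk (a * σ g))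

/-- `v'` is a diagonal neighbour of `v`: `v' = S_w² • v` for some vertex `w` adjacent to `v`. -/
def DiagNeighbor (x y : G) (v v' : Vertex y) : Prop :=
  ∃ w : Vertex y, Adj x y v w ∧ v' = rot y w ^ 2 • v

/-- Diagonal alignment: the reflexive-transitive closure of the diagonal-neighbour relation. -/
def Aligned (x y : G) : Vertex y → Vertex y → Prop :=
  Relation.ReflTransGen (DiagNeighbor x y)

/-- The primitive period `J`: the least `j ≥ 1` such that `S_v^j` fixes every vertex
diagonally aligned with `v` (this is independent of `v`). -/
noncomputable def primPeriod (x y : G) : ℕ :=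
  sInf {j : ℕ | 1 ≤ j ∧ ∀ v v' : Vertex y, Aligned x y v v' → rot y v ^ j • v' = v'}

/-- The even period `T = lcm(J, 2)`. -/
noncomputable def evenPeriod (x y : G) : ℕ := Nat.lcm (primPeriod x y) 2

/-- Relators of the tetrahedral group ⟨X,Y ∣ X³, Y³, (XY)²⟩. -/
def tetRels : Set (FreeGroup (Fin 2)) :=
  {FreeGroup.of 0 ^ 3, FreeGroup.of 1 ^ 3, (FreeGroup.of 0 * FreeGroup.of 1) ^ 2}

/-- Relators of the Fermat group ⟨X,Y ∣ X³, Y^(2n), (XY)², [X,Y]³⟩. -/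
def fermatRels (n : ℕ) : Set (FreeGroup (Fin 2)) :=
  {FreeGroup.of 0 ^ 3, FreeGroup.of 1 ^ (2 * n), (FreeGroup.of 0 * FreeGroup.of 1) ^ 2,
    (FreeGroup.of 0 * FreeGroup.of 1 * (FreeGroup.of 0)⁻¹ * (FreeGroup.of 1)⁻¹) ^ 3}

/-- `(G,x,y)` is the tetrahedral map: the canonical homomorphism from the presented
group ⟨X,Y ∣ X³, Y³, (XY)²⟩ sending X to x and Y to y is an isomorphism. -/
def IsTet (G : Type*) [Group G] (x y : G) : Prop :=
  ∃ e : PresentedGroup tetRels ≃* G,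
    e (PresentedGroup.of 0) = x ∧ e (PresentedGroup.of 1) = y

/-- `(G,x,y)` is the Fermat map `Fer(n)`: the canonical homomorphism from the Fermat
group `G_n` sending X to x and Y to y is an isomorphism. -/
def IsFermat (n : ℕ) (G : Type*) [Group G] (x y : G) : Prop :=
  ∃ e : PresentedGroup (fermatRels n) ≃* G,
    e (PresentedGroup.of 0) = x ∧ e (PresentedGroup.of 1) = y

/-!
Write `a = y²` and `b = x y² x⁻¹`. From `x³ = (xy)² = 1` one gets `⁅x, y⁆ = x y² x` and
`⁅y, x⁆ = a b x`, so that `⁅x, y⁆³ = 1` says exactly that `a` and `b` commute. The involutions `yx`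
and `xy` have product `⁅y, x⁆`, hence generate an image of the dihedral group of order
six, and conjugation by it permutes `a`, `b` and `(ab)⁻¹` like the coordinates of `(ℤ/nℤ)³` modulo
the diagonal. This gives a homomorphism from the semidirect product to `G_n`. Conversely the
semidirect product contains a pair satisfying the relators of `G_n`, and the two resulting
homomorphisms are mutually inverse because they are so on generators.
-/

open Multiplicative (ofAdd)
open scoped commutatorElement

section Relations

variable {g x y : G}

theorem inv_eq_self_of_sq_eq_one (hg : g ^ 2 = 1) : g⁻¹ = g :=
  inv_eq_of_mul_eq_one_left (by rw [← pow_two, hg])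

theorem mul_self_eq_inv_of_pow_three_eq_one (hg : g ^ 3 = 1) : g * g = g⁻¹ := by
  rw [eq_inv_iff_mul_eq_one, ← pow_two, ← pow_succ, hg]

theorem inv_mul_inv_eq_self_of_pow_three_eq_one (hg : g ^ 3 = 1) : g⁻¹ * g⁻¹ = g := by
  rw [← mul_inv_rev, mul_self_eq_inv_of_pow_three_eq_one hg, inv_inv]

theorem swap_mul_sq_eq_one (hxy : (x * y) ^ 2 = 1) : (y * x) ^ 2 = 1 := by
  calc (y * x) ^ 2 = x⁻¹ * (x * y) ^ 2 * x := by simp only [pow_two]; group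
    _ = 1 := by rw [hxy]; group

theorem mul_mul_self_eq_inv (hxy : (x * y) ^ 2 = 1) : x * y * x = y⁻¹ := by
  rw [eq_inv_iff_mul_eq_one, mul_assoc, ← pow_two, hxy]

theorem commutator_eq_mul_sq_mul (hxy : (x * y) ^ 2 = 1) : ⁅x, y⁆ = x * y ^ 2 * x := by
  calc ⁅x, y⁆ = x * y * x⁻¹ * (x * y * x) := by rw [commutatorElement_def, mul_mul_self_eq_inv hxy]
    _ = x * y ^ 2 * x := by simp [pow_two, mul_assoc]

theorem mul_commutator_swap_eq_inv_mul (hxy : (x * y) ^ 2 = 1) :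
    x * y * ⁅y, x⁆ = ⁅y, x⁆⁻¹ * (x * y) := by
  calc x * y * ⁅y, x⁆ = x * y * (y * x) * (x * y)⁻¹ := by rw [commutatorElement_def]; group
    _ = x * y * (y * x)⁻¹ * (x * y) := by
        rw [inv_eq_self_of_sq_eq_one hxy, inv_eq_self_of_sq_eq_one (swap_mul_sq_eq_one hxy)]
    _ = ⁅y, x⁆⁻¹ * (x * y) := by rw [commutatorElement_inv, commutatorElement_def]; group

theorem sq_mul_pow_three_eq_one (hx : x ^ 3 = 1) (hxy : (x * y) ^ 2 = 1) : (y ^ 2 * x) ^ 3 = 1 := by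
  calc (y ^ 2 * x) ^ 3 = y * ((y * x * y) * (y * x * y)) * (y * x) := by
        simp only [pow_succ, pow_zero, one_mul, mul_assoc]
    _ = (y * x) ^ 2 := by
        rw [mul_mul_self_eq_inv (swap_mul_sq_eq_one hxy),
          inv_mul_inv_eq_self_of_pow_three_eq_one hx, pow_two]
    _ = 1 := swap_mul_sq_eq_one hxy

theorem commutator_swap_eq_mul_mul (hx : x ^ 3 = 1) (hxy : (x * y) ^ 2 = 1) :
    ⁅y, x⁆ = y ^ 2 * (x * y ^ 2 * x⁻¹) * x := by
  rw [← commutatorElement_inv, inv_eq_iff_mul_eq_one, commutator_eq_mul_sq_mul hxy]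
  calc x * y ^ 2 * x * (y ^ 2 * (x * y ^ 2 * x⁻¹) * x)
      = (y ^ 2)⁻¹ * (y ^ 2 * x) ^ 3 * y ^ 2 := by rw [pow_three]; group
    _ = 1 := by rw [sq_mul_pow_three_eq_one hx hxy]; group

theorem commute_sq_conj_sq (hx : x ^ 3 = 1) (hxy : (x * y) ^ 2 = 1) (hc : ⁅x, y⁆ ^ 3 = 1) :
    Commute (y ^ 2) (x * y ^ 2 * x⁻¹) := by
  refine mul_right_cancel (b := x) ?_
  calc y ^ 2 * (x * y ^ 2 * x⁻¹) * x = ⁅x, y⁆ * ⁅x, y⁆ := by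
        rw [← commutator_swap_eq_mul_mul hx hxy, mul_self_eq_inv_of_pow_three_eq_one hc,
          commutatorElement_inv]
    _ = x * y ^ 2 * (x * x) * y ^ 2 * x := by
        rw [commutator_eq_mul_sq_mul hxy]
        simp only [mul_assoc]
    _ = x * y ^ 2 * x⁻¹ * y ^ 2 * x := by rw [mul_self_eq_inv_of_pow_three_eq_one hx]

theorem semiconjBy_commutator_sq (hx : x ^ 3 = 1) (hxy : (x * y) ^ 2 = 1)
    (hc : ⁅x, y⁆ ^ 3 = 1) : SemiconjBy ⁅y, x⁆ (y ^ 2) (x * y ^ 2 * x⁻¹) := by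
  rw [commutator_swap_eq_mul_mul hx hxy]
  exact ((commute_sq_conj_sq hx hxy hc).mul_left (.refl _)).semiconjBy.mul_left (.conj_mk _ _)

theorem semiconjBy_commutator_conj_sq (hx : x ^ 3 = 1) (hxy : (x * y) ^ 2 = 1) :
    SemiconjBy ⁅y, x⁆ (x * y ^ 2 * x⁻¹) (y ^ 2 * (x * y ^ 2 * x⁻¹))⁻¹ := by
  have semiconjBy_left : SemiconjBy x (x * y ^ 2 * x⁻¹) (y ^ 2 * (x * y ^ 2 * x⁻¹))⁻¹ := by
    rw [SemiconjBy, eq_inv_mul_iff_mul_eq]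
    calc y ^ 2 * (x * y ^ 2 * x⁻¹) * (x * (x * y ^ 2 * x⁻¹))
        = (y ^ 2 * x) ^ 3 * (x⁻¹ * x⁻¹) := by rw [pow_three]; group
      _ = x := by
          rw [sq_mul_pow_three_eq_one hx hxy, one_mul, inv_mul_inv_eq_self_of_pow_three_eq_one hx]
  rw [commutator_swap_eq_mul_mul hx hxy]
  exact (Commute.refl _).inv_right.semiconjBy.mul_left semiconjBy_left

theorem semiconjBy_mul_sq (x y : G) : SemiconjBy (x * y) (y ^ 2) (x * y ^ 2 * x⁻¹) :=
  (SemiconjBy.conj_mk x (y ^ 2)).mul_left (Commute.self_pow y 2).semiconjBy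

theorem semiconjBy_mul_conj_sq (hxy : (x * y) ^ 2 = 1) :
    SemiconjBy (x * y) (x * y ^ 2 * x⁻¹) (y ^ 2) := by
  have h := (semiconjBy_mul_sq x y).inv_symm_left
  rwa [inv_eq_self_of_sq_eq_one hxy] at h

end Relations

section CyclicLift

variable {m n : ℕ} {g a b : G}

theorem exists_ofAdd_one_zpow_eq (p : Multiplicative (ZMod n)) :
    ∃ k : ℤ, ofAdd (1 : ZMod n) ^ k = p := by
  obtain ⟨k, hk⟩ := ZMod.intCast_surjective p.toAdd
  exact ⟨k, by simp [← ofAdd_zsmul, hk]⟩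

theorem ofAdd_one_pow_eq_one (n : ℕ) : ofAdd (1 : ZMod n) ^ n = 1 := by
  simp [← ofAdd_nsmul]

theorem zmod_hom_ext {f f' : Multiplicative (ZMod n) →* G} (h : f (ofAdd 1) = f' (ofAdd 1)) :
    f = f' := by
  refine MonoidHom.ext fun p => ?_
  obtain ⟨k, rfl⟩ := exists_ofAdd_one_zpow_eq p
  rw [map_zpow, map_zpow, h]

theorem zmod_prod_hom_ext {f f' : Multiplicative (ZMod m) × Multiplicative (ZMod n) →* G}
    (hl : f (ofAdd 1, 1) = f' (ofAdd 1, 1)) (hr : f (1, ofAdd 1) = f' (1, ofAdd 1)) :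
    f = f' := by
  rw [← MonoidHom.noncommCoprod_unique f, ← MonoidHom.noncommCoprod_unique f']
  congr 1
  exacts [zmod_hom_ext hl, zmod_hom_ext hr]

theorem semiconjBy_zmod_prod {f f' : Multiplicative (ZMod m) × Multiplicative (ZMod n) →* G}
    (hl : SemiconjBy g (f (ofAdd 1, 1)) (f' (ofAdd 1, 1)))
    (hr : SemiconjBy g (f (1, ofAdd 1)) (f' (1, ofAdd 1)))
    (p : Multiplicative (ZMod m) × Multiplicative (ZMod n)) : SemiconjBy g (f p) (f' p) := by
  have conj_comp : (MulAut.conj g).toMonoidHom.comp f = f' :=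
    zmod_prod_hom_ext (mul_inv_eq_of_eq_mul hl) (mul_inv_eq_of_eq_mul hr)
  exact mul_inv_eq_iff_eq_mul.1 (DFunLike.congr_fun conj_comp p)

/-- The universal property of `ℤ/nℤ`, written multiplicatively: the homomorphism sending the
standard generator to an element `g` with `g ^ n = 1`. -/
def zmodLift (hg : g ^ n = 1) : Multiplicative (ZMod n) →* G :=
  AddMonoidHom.toMultiplicativeLeft <|
    ZMod.lift n ⟨zmultiplesHom (Additive G) (Additive.ofMul g), by simp [← ofMul_pow, hg]⟩

@[simp]
theorem zmodLift_ofAdd_one (hg : g ^ n = 1) : zmodLift hg (ofAdd 1) = g := by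
  have h := ZMod.lift_coe n ⟨zmultiplesHom (Additive G) (Additive.ofMul g), by
    simp [← ofMul_pow, hg]⟩ 1
  simpa [zmodLift] using congrArg Additive.toMul h

theorem zmodLift_inv (hg : g ^ n = 1) (hg' : g⁻¹ ^ n = 1) (p : Multiplicative (ZMod n)) :
    zmodLift hg' p = zmodLift hg p⁻¹ := by
  obtain ⟨k, rfl⟩ := exists_ofAdd_one_zpow_eq p
  simp

theorem semiconjBy_zmodLift (h : SemiconjBy g a b) (ha : a ^ n = 1) (hb : b ^ n = 1)
    (p : Multiplicative (ZMod n)) : SemiconjBy g (zmodLift ha p) (zmodLift hb p) := by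
  obtain ⟨k, rfl⟩ := exists_ofAdd_one_zpow_eq p
  simpa using h.zpow_right k

theorem commute_zmodLift (h : Commute a b) (ha : a ^ m = 1) (hb : b ^ n = 1)
    (p : Multiplicative (ZMod m)) (q : Multiplicative (ZMod n)) :
    Commute (zmodLift ha p) (zmodLift hb q) := by
  obtain ⟨k, rfl⟩ := exists_ofAdd_one_zpow_eq p
  obtain ⟨l, rfl⟩ := exists_ofAdd_one_zpow_eq q
  simpa using h.zpow_zpow k l

end CyclicLift

section Dihedral

open DihedralGroup

variable {n : ℕ} {ρ σ : G}

theorem closure_r_one_sr_zero (n : ℕ) :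
    Subgroup.closure {(r 1 : DihedralGroup n), sr 0} = ⊤ := by
  have r_mem (i : ZMod n) : r i ∈ Subgroup.closure {(r 1 : DihedralGroup n), sr 0} := by
    obtain ⟨k, rfl⟩ := ZMod.intCast_surjective i
    rw [← r_one_zpow]
    exact zpow_mem (Subgroup.subset_closure (by simp)) k
  refine eq_top_iff.2 fun g _ => ?_
  rcases g with i | i
  · exact r_mem i
  · rw [← zero_add i, ← sr_mul_r]
    exact mul_mem (Subgroup.subset_closure (by simp)) (r_mem i)

theorem dihedral_hom_ext {f f' : DihedralGroup n →* G} (hr : f (r 1) = f' (r 1))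
    (hsr : f (sr 0) = f' (sr 0)) : f = f' :=
  MonoidHom.eq_of_eqOn_dense (closure_r_one_sr_zero n) (by simp [Set.EqOn, hr, hsr])

/-- The universal property of the dihedral group: the homomorphism sending `r 1` and `sr 0` to
elements `ρ` and `σ` with `ρ ^ n = 1`, `σ ^ 2 = 1` and `σ * ρ = ρ⁻¹ * σ`. -/
def dihedralLift (hρ : ρ ^ n = 1) (hσ : σ ^ 2 = 1) (hσρ : σ * ρ = ρ⁻¹ * σ) :
    DihedralGroup n →* G :=
  let rotation (i : ZMod n) : G := zmodLift hρ (ofAdd i)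
  have rotation_add (i j : ZMod n) : rotation (i + j) = rotation i * rotation j :=
    map_mul (zmodLift hρ) _ _
  have rotation_mul_σ (i : ZMod n) : rotation i * σ = σ * rotation (-i) := by
    have h := semiconjBy_zmodLift (g := σ) hσρ hρ (by simp [hρ]) (ofAdd (-i))
    rw [zmodLift_inv hρ, ← ofAdd_neg, neg_neg] at h
    exact h.eq.symm
  MonoidHom.mk'
    (fun
      | r i => rotation i
      | sr i => σ * rotation i) <| by
    rintro (i | i) (j | j)
    · exact rotation_add i j
    · calc σ * rotation (j - i) = σ * (rotation (-i) * rotation j) := by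
            rw [← rotation_add, neg_add_eq_sub]
        _ = rotation i * (σ * rotation j) := by rw [← mul_assoc, ← mul_assoc, rotation_mul_σ]
    · exact (congrArg (σ * ·) (rotation_add i j)).trans (mul_assoc _ _ _).symm
    · calc rotation (j - i) = σ ^ 2 * (rotation (-i) * rotation j) := by
            rw [← rotation_add, neg_add_eq_sub, hσ, one_mul]
        _ = σ * (σ * rotation (-i)) * rotation j := by simp only [pow_two, mul_assoc]
        _ = σ * rotation i * (σ * rotation j) := by simp only [← rotation_mul_σ, mul_assoc]

@[simp]
theorem dihedralLift_r_one (hρ : ρ ^ n = 1) (hσ : σ ^ 2 = 1) (hσρ : σ * ρ = ρ⁻¹ * σ) :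
    dihedralLift hρ hσ hσρ (r 1) = ρ :=
  zmodLift_ofAdd_one hρ

@[simp]
theorem dihedralLift_sr_zero (hρ : ρ ^ n = 1) (hσ : σ ^ 2 = 1) (hσρ : σ * ρ = ρ⁻¹ * σ) :
    dihedralLift hρ hσ hσρ (sr 0) = σ := by
  simp [dihedralLift]

/-- The dihedral group of order six acting on the vertices of a triangle. -/
def dihedralThreeToPerm : DihedralGroup 3 →* Equiv.Perm (Fin 3) :=
  dihedralLift (ρ := finRotate 3) (σ := Equiv.swap 0 1) (by decide) (by decide) (by decide)

theorem dihedralThreeToPerm_bijective : Function.Bijective dihedralThreeToPerm := by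
  decide

end Dihedral

section Semidirect

variable {N K : Type*} [Group N] [Group K]

theorem semiconjBy_of_closure_eq_top {φ : K →* MulAut N} {fn : N →* G} {fk : K →* G} {S : Set K}
    (hS : Subgroup.closure S = ⊤)
    (h : ∀ k ∈ S, ∀ p, SemiconjBy (fk k) (fn p) (fn (φ k p))) (k : K) (p : N) :
    SemiconjBy (fk k) (fn p) (fn (φ k p)) := by
  have hk : k ∈ Subgroup.closure S := hS ▸ Subgroup.mem_top k
  induction hk using Subgroup.closure_induction generalizing p with
  | mem k hk => exact h k hk p
  | one => simp
  | mul k l _ _ ihk ihl => simpa using (ihk (φ l p)).mul_left (ihl p)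
  | inv k _ ih => simpa using ih ((φ k)⁻¹ p)

variable (M : Type*) [CommGroup M]

/-- The automorphism of `M × M` of order three which, viewing `M × M` as `M × M × M` modulo the
diagonal via `(p, q) ↦ (p, q, 1)`, permutes the coordinates cyclically. -/
@[simps]
def rotateAut : MulAut (M × M) where
  toFun p := (p.2⁻¹, p.1 * p.2⁻¹)
  invFun p := (p.2 * p.1⁻¹, p.1⁻¹)
  left_inv p := by simp
  right_inv p := by simp
  map_mul' p q := by ext <;> simp [mul_mul_mul_comm, mul_comm]

/-- The action of the dihedral group of order six on `M × M`, identified with `M × M × M` modulo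
the diagonal via `(p, q) ↦ (p, q, 1)`, by permutations of the three coordinates. -/
def dihedralAction : DihedralGroup 3 →* MulAut (M × M) :=
  dihedralLift (ρ := rotateAut M) (σ := MulEquiv.prodComm)
    (by ext p <;> simp [pow_three]) (by ext p <;> simp [pow_two])
    (by ext p <;> simp)

variable {M}

@[simp]
theorem dihedralAction_r_one (p q : M) :
    dihedralAction M (DihedralGroup.r 1) (p, q) = (q⁻¹, p * q⁻¹) := by
  rw [dihedralAction, dihedralLift_r_one, rotateAut_apply]

@[simp]
theorem dihedralAction_sr_zero (p q : M) :
    dihedralAction M (DihedralGroup.sr 0) (p, q) = (q, p) := by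
  rw [dihedralAction, dihedralLift_sr_zero]
  rfl

@[simp]
theorem dihedralAction_sr_one (p q : M) :
    dihedralAction M (DihedralGroup.sr 1) (p, q) = (p * q⁻¹, q⁻¹) := by
  rw [show (DihedralGroup.sr 1 : DihedralGroup 3) = .sr 0 * .r 1 from rfl, map_mul]
  simp

end Semidirect

section Rotations

open SemidirectProduct DihedralGroup

variable {M : Type*} [CommGroup M]

/-- The element of order three corresponding to the generator `X` of the Fermat group, the rotation
about a face of the Fermat map. The translation parts of `faceRotation g` and `vertexRotation g`
are chosen so that their two products lie in the dihedral complement. -/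
def faceRotation (g : M) : (M × M) ⋊[dihedralAction M] DihedralGroup 3 :=
  ⟨(g⁻¹, g⁻¹), r 1⟩

/-- The element corresponding to the generator `Y` of the Fermat group, the rotation about a vertex
of the Fermat map. -/
def vertexRotation (g : M) : (M × M) ⋊[dihedralAction M] DihedralGroup 3 :=
  ⟨(1, g⁻¹), sr 1⟩

theorem faceRotation_mul_vertexRotation (g : M) :
    faceRotation g * vertexRotation g = inr (sr 0) := by
  ext <;> simp [faceRotation, vertexRotation]

theorem vertexRotation_mul_faceRotation (g : M) :
    vertexRotation g * faceRotation g = inr (sr 2) :=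
  SemidirectProduct.ext (by simp [faceRotation, vertexRotation]) rfl

theorem vertexRotation_sq (g : M) : vertexRotation g ^ 2 = inl (g, 1) := by
  ext <;> simp [pow_two, vertexRotation]

theorem faceRotation_pow_three (g : M) : faceRotation g ^ 3 = 1 :=
  SemidirectProduct.ext (by simp [pow_three, faceRotation]) rfl

theorem conj_vertexRotation_sq (g : M) :
    faceRotation g * vertexRotation g ^ 2 * (faceRotation g)⁻¹ = inl (1, g) := by
  rw [mul_inv_eq_iff_eq_mul, vertexRotation_sq]
  ext <;> simp [faceRotation]

theorem commutator_vertexRotation (g : M) :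
    ⁅vertexRotation g, faceRotation g⁆ = inr (r 1) := by
  rw [commutatorElement_def, mul_assoc, ← mul_inv_rev, vertexRotation_mul_faceRotation,
    faceRotation_mul_vertexRotation, mul_inv_eq_iff_eq_mul, ← map_mul]
  rfl

end Rotations

/-- A pair `(x, y)` of elements of a group satisfying the defining relations of the Fermat group
`G_n`. -/
structure IsFermatPair (n : ℕ) (x y : G) : Prop where
  x_pow : x ^ 3 = 1
  y_pow : y ^ (2 * n) = 1
  mul_pow : (x * y) ^ 2 = 1
  commutator_pow : ⁅x, y⁆ ^ 3 = 1

theorem isFermatPair_of_zero_of_one (n : ℕ) :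
    IsFermatPair n (PresentedGroup.of 0 : PresentedGroup (fermatRels n)) (PresentedGroup.of 1) := by
  have rel {w : FreeGroup (Fin 2)} (hw : w ∈ fermatRels n) : PresentedGroup.mk _ w = 1 :=
    PresentedGroup.one_of_mem hw
  constructor
  · exact rel (.inl rfl)
  · exact rel (.inr (.inl rfl))
  · exact rel (.inr (.inr (.inl rfl)))
  · exact rel (.inr (.inr (.inr rfl)))

theorem isFermatPair_rotations {M : Type*} [CommGroup M] {n : ℕ} {g : M} (hg : g ^ n = 1) :
    IsFermatPair n (faceRotation g) (vertexRotation g) where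
  x_pow := faceRotation_pow_three g
  y_pow := by rw [pow_mul, vertexRotation_sq, ← map_pow, Prod.pow_mk, hg, one_pow]; rfl
  mul_pow := by rw [faceRotation_mul_vertexRotation, ← map_pow]; rfl
  commutator_pow := by
    rw [← commutatorElement_inv, commutator_vertexRotation, ← map_inv, ← map_pow]; rfl

namespace IsFermatPair

variable {n : ℕ} {x y : G}

/-- The universal property of the Fermat group: the homomorphism sending the standard generators to
`x` and `y`. -/
def fermatLift (h : IsFermatPair n x y) : PresentedGroup (fermatRels n) →* G :=
  PresentedGroup.toGroup (f := ![x, y]) <| by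
    rintro r (rfl | rfl | rfl | rfl)
    · simpa using h.x_pow
    · simpa using h.y_pow
    · simpa using h.mul_pow
    · simpa [commutatorElement_def] using h.commutator_pow

@[simp]
theorem fermatLift_of_zero (h : IsFermatPair n x y) : h.fermatLift (.of 0) = x :=
  PresentedGroup.toGroup.of _

@[simp]
theorem fermatLift_of_one (h : IsFermatPair n x y) : h.fermatLift (.of 1) = y :=
  PresentedGroup.toGroup.of _

theorem commutator_swap_pow_three (h : IsFermatPair n x y) : ⁅y, x⁆ ^ 3 = 1 := by
  rw [← commutatorElement_inv, inv_pow, h.commutator_pow, inv_one]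

theorem sq_pow (h : IsFermatPair n x y) : (y ^ 2) ^ n = 1 := by
  rw [← pow_mul, h.y_pow]

theorem conj_sq_pow (h : IsFermatPair n x y) : (x * y ^ 2 * x⁻¹) ^ n = 1 := by
  rw [conj_pow, h.sq_pow, mul_one, mul_inv_cancel]

/-- The homomorphism from `(ℤ/nℤ)²` onto the abelian normal subgroup generated by the conjugates
of `y ^ 2`. -/
def translationHom (h : IsFermatPair n x y) :
    Multiplicative (ZMod n) × Multiplicative (ZMod n) →* G :=
  (zmodLift h.sq_pow).noncommCoprod (zmodLift h.conj_sq_pow)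
    (commute_zmodLift (commute_sq_conj_sq h.x_pow h.mul_pow h.commutator_pow) _ _)

@[simp]
theorem translationHom_left (h : IsFermatPair n x y) :
    h.translationHom (ofAdd 1, 1) = y ^ 2 := by
  simp [translationHom]

@[simp]
theorem translationHom_right (h : IsFermatPair n x y) :
    h.translationHom (1, ofAdd 1) = x * y ^ 2 * x⁻¹ := by
  simp [translationHom]

theorem translationHom_inv (h : IsFermatPair n x y) :
    h.translationHom ((ofAdd 1)⁻¹, (ofAdd 1)⁻¹) = (y ^ 2 * (x * y ^ 2 * x⁻¹))⁻¹ := by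
  rw [← h.translationHom_right, ← h.translationHom_left, ← map_mul, ← map_inv h.translationHom]
  simp

/-- The homomorphism from the dihedral group of order six onto the subgroup generated by the
involutions `x * y` and `y * x`, which complements the conjugates of `y ^ 2`. -/
def dihedralHom (h : IsFermatPair n x y) : DihedralGroup 3 →* G :=
  dihedralLift h.commutator_swap_pow_three h.mul_pow (mul_commutator_swap_eq_inv_mul h.mul_pow)

@[simp]
theorem dihedralHom_r_one (h : IsFermatPair n x y) : h.dihedralHom (.r 1) = ⁅y, x⁆ :=
  dihedralLift_r_one ..

@[simp]
theorem dihedralHom_sr_zero (h : IsFermatPair n x y) : h.dihedralHom (.sr 0) = x * y :=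
  dihedralLift_sr_zero ..

theorem semiconjBy_dihedralHom (h : IsFermatPair n x y) (k : DihedralGroup 3)
    (p : Multiplicative (ZMod n) × Multiplicative (ZMod n)) :
    SemiconjBy (h.dihedralHom k) (h.translationHom p)
      (h.translationHom (dihedralAction _ k p)) := by
  have semiconjBy_of_generators (k : DihedralGroup 3) :=
    semiconjBy_zmod_prod (g := h.dihedralHom k) (f := h.translationHom)
      (f' := h.translationHom.comp (dihedralAction _ k).toMonoidHom)
  refine semiconjBy_of_closure_eq_top (closure_r_one_sr_zero 3) ?_ k p
  rintro k (rfl | rfl) <;> refine semiconjBy_of_generators _ ?_ ?_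
  · simpa using semiconjBy_commutator_sq h.x_pow h.mul_pow h.commutator_pow
  · simpa [translationHom_inv] using semiconjBy_commutator_conj_sq h.x_pow h.mul_pow
  · simpa using semiconjBy_mul_sq x y
  · simpa using semiconjBy_mul_conj_sq h.mul_pow

/-- The homomorphism from the semidirect product assembled from `translationHom` and
`dihedralHom`. -/
def semidirectLift (h : IsFermatPair n x y) :
    (Multiplicative (ZMod n) × Multiplicative (ZMod n)) ⋊[dihedralAction _] DihedralGroup 3 →* G :=
  SemidirectProduct.lift h.translationHom h.dihedralHom fun k =>
    MonoidHom.ext fun p => eq_mul_inv_of_mul_eq (h.semiconjBy_dihedralHom k p).symm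

@[simp]
theorem semidirectLift_inl (h : IsFermatPair n x y)
    (p : Multiplicative (ZMod n) × Multiplicative (ZMod n)) :
    h.semidirectLift (.inl p) = h.translationHom p :=
  SemidirectProduct.lift_inl ..

@[simp]
theorem semidirectLift_inr (h : IsFermatPair n x y) (k : DihedralGroup 3) :
    h.semidirectLift (.inr k) = h.dihedralHom k :=
  SemidirectProduct.lift_inr ..

theorem semidirectLift_faceRotation (h : IsFermatPair n x y) :
    h.semidirectLift (faceRotation (ofAdd 1)) = x := by
  rw [faceRotation, SemidirectProduct.mk_eq_inl_mul_inr, map_mul, semidirectLift_inl,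
    semidirectLift_inr, translationHom_inv, dihedralHom_r_one,
    commutator_swap_eq_mul_mul h.x_pow h.mul_pow, inv_mul_cancel_left]

theorem semidirectLift_vertexRotation (h : IsFermatPair n x y) :
    h.semidirectLift (vertexRotation (ofAdd 1)) = y := by
  have lift_mul := congrArg h.semidirectLift (faceRotation_mul_vertexRotation (ofAdd 1))
  rw [map_mul, semidirectLift_faceRotation, semidirectLift_inr, dihedralHom_sr_zero] at lift_mul
  exact mul_left_cancel lift_mul

end IsFermatPair

/-- The Fermat group as the semidirect product of `(ℤ/nℤ)²` and the dihedral group of order six;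
`X` and `Y` correspond to `faceRotation` and `vertexRotation`. -/
def fermatGroupEquiv (n : ℕ) : PresentedGroup (fermatRels n) ≃*
    (Multiplicative (ZMod n) × Multiplicative (ZMod n)) ⋊[dihedralAction _] DihedralGroup 3 :=
  MonoidHom.toMulEquiv (isFermatPair_rotations (ofAdd_one_pow_eq_one n)).fermatLift
    (isFermatPair_of_zero_of_one n).semidirectLift
    (by
      ext i
      fin_cases i
      · simpa using (isFermatPair_of_zero_of_one n).semidirectLift_faceRotation
      · simpa using (isFermatPair_of_zero_of_one n).semidirectLift_vertexRotation)
    (by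
      refine SemidirectProduct.hom_ext (zmod_prod_hom_ext ?_ ?_) (dihedral_hom_ext ?_ ?_)
      · simp [vertexRotation_sq]
      · simp [conj_vertexRotation_sq]
      · simp [map_commutatorElement, commutator_vertexRotation]
      · simp [faceRotation_mul_vertexRotation])

/-- The Fermat group `G_n` is a semidirect product `(ℤ/nℤ)² ⋊ Sym(3)`. -/
theorem fermat_group_semidirect_structure (n : ℕ) (hn : 1 ≤ n) :
    ∃ φ : Equiv.Perm (Fin 3) →* MulAut (Multiplicative (ZMod n × ZMod n)),
      Nonempty (PresentedGroup (fermatRels n) ≃*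
        SemidirectProduct (Multiplicative (ZMod n × ZMod n)) (Equiv.Perm (Fin 3)) φ) := by
  let translations : Multiplicative (ZMod n) × Multiplicative (ZMod n) ≃*
      Multiplicative (ZMod n × ZMod n) := (MulEquiv.prodMultiplicative _ _).symm
  let rotations : DihedralGroup 3 ≃* Equiv.Perm (Fin 3) :=
    MulEquiv.ofBijective dihedralThreeToPerm dihedralThreeToPerm_bijective
  exact ⟨_, ⟨(fermatGroupEquiv n).trans (SemidirectProduct.congr' translations rotations)⟩⟩

end RegularMap
end

section
/- For every integer n ≥ 1, the triple (G_n, X, Y) (with X, Y the images of the generators in the Fermat group G_n) encodes a reflexive regular map: X and Y generate G_n, (X*Y)² = 1, and there is a group automorphism of G_n sending X to X⁻¹ and Y to Y⁻¹; moreover this map is simple, its graph has exactly 3n vertices each of degree 2n, and its density equals 2/3. -/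
namespace RegularMap

variable {G : Type*} [Group G]

/-!
`G_n` acts on `Fin 3 × ZMod n`, the vertex set of the complete tripartite graph `K_{n,n,n}`: `X`
permutes the three colours cyclically and `Y` rotates about the base vertex `(0, 0)`, which it
fixes. Conversely, put `A = Y²`, `B = X A X⁻¹`, `C = X⁻¹ A X`. The relations give `(X A)³ = 1` and
`(A X⁻¹)³ = 1`, that is `B C A = 1` and `A C B = 1`; hence `A`, `B` commute and `C = (A B)⁻¹`. It
follows that the cosets `Xⁱ Bᵗ ⟨Y⟩` are permuted by `X` and `Y` as the vertices `(i, t)` are, so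
that `⟨Y⟩` is the full stabilizer of `(0, 0)`. Everything else is read off from this action: `Y`
has order `2n` on the vertex `X Y • (0, 0) = (1, 0)`, so no nontrivial element fixes both ends of
an edge.
-/

open scoped commutatorElement

theorem map_smul_of_closure_eq_top {α β : Type*} [MulAction G α] [MulAction G β] {s : Set G}
    (hs : Subgroup.closure s = ⊤) {f : α → β} (hf : ∀ g ∈ s, ∀ a, f (g • a) = g • f a) (g : G)
    (a : α) : f (g • a) = g • f a := by
  have hg : g ∈ Subgroup.closure s := hs ▸ Subgroup.mem_top g
  induction hg using Subgroup.closure_induction generalizing a with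
  | mem g hg => exact hf g hg a
  | one => rw [one_smul, one_smul]
  | mul g h _ _ ihg ihh => rw [mul_smul, ihg, ihh, mul_smul]
  | inv g _ ih => rw [eq_inv_smul_iff, ← ih, smul_inv_smul]

section RegularMaps

variable {x y : G}

theorem mul_mul_mul_mul_cancel_of_sq_eq_one (hxy : (x * y) ^ 2 = 1) (g : G) :
    g * x * y * x * y = g := by
  calc g * x * y * x * y = g * (x * y) ^ 2 := by simp only [sq, mul_assoc]
    _ = g := by rw [hxy, mul_one]

theorem mk_eq_mk_iff_smul_eq {Ω : Type*} [MulAction G Ω] {o : Ω}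
    (hstab : MulAction.stabilizer G o = Subgroup.zpowers y) (g h : G) :
    (QuotientGroup.mk g : Vertex y) = QuotientGroup.mk h ↔ g • o = h • o := by
  rw [QuotientGroup.eq, ← hstab, MulAction.mem_stabilizer_iff, mul_smul, inv_smul_eq_iff, eq_comm]

theorem isSimple_of_stabilizer_eq_zpowers {Ω : Type*} [MulAction G Ω] {o : Ω}
    (hxy : (x * y) ^ 2 = 1) (hstab : MulAction.stabilizer G o = Subgroup.zpowers y)
    (hne : (x * y) • o ≠ o)
    (hfix : ∀ g : G, g • o = o → g • (x * y) • o = (x * y) • o → g = 1) :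
    IsSimple x y := by
  have eq_of_ends {g h : G} (h₁ : g • o = h • o) (h₂ : (g * x * y) • o = (h * x * y) • o) :
      g = h := by
    refine (inv_mul_eq_one.mp (hfix (h⁻¹ * g) ?_ ?_)).symm
    · rw [mul_smul, h₁, inv_smul_smul]
    · rw [mul_smul, inv_smul_eq_iff, ← mul_smul, ← mul_smul, ← mul_assoc, ← mul_assoc, h₂]
  refine ⟨fun g hg => hne ?_, fun g h hgh => ?_⟩
  · rw [mk_eq_mk_iff_smul_eq hstab, mul_assoc, mul_smul, smul_left_cancel_iff] at hg
    exact hg.symm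
  · simp only [Set.pair_eq_pair_iff, mk_eq_mk_iff_smul_eq hstab] at hgh
    rcases hgh with ⟨h₁, h₂⟩ | ⟨h₁, h₂⟩
    · rw [eq_of_ends h₁ h₂]
    · obtain rfl : g = h * x * y :=
        eq_of_ends h₁ (by rw [mul_mul_mul_mul_cancel_of_sq_eq_one hxy, h₂])
      rw [mul_assoc]
      exact QuotientGroup.mk_mul_of_mem h (Subgroup.mem_zpowers _)

theorem adj_mk_iff (hxy : (x * y) ^ 2 = 1)
    (hloop : ∀ g : G, (QuotientGroup.mk g : Vertex y) ≠ QuotientGroup.mk (g * x * y)) (g : G)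
    (w : Vertex y) :
    Adj x y (QuotientGroup.mk g) w ↔
      ∃ a ∈ Subgroup.zpowers y, QuotientGroup.mk (g * a * x * y) = w := by
  constructor
  · rintro ⟨-, k, hk⟩
    obtain ⟨k, hgk, rfl⟩ : ∃ k : G, (QuotientGroup.mk g : Vertex y) = QuotientGroup.mk k ∧
        w = QuotientGroup.mk (k * x * y) := by
      rcases Set.pair_eq_pair_iff.mp hk with ⟨h₁, h₂⟩ | ⟨h₁, h₂⟩
      · exact ⟨k, h₁, h₂⟩
      · exact ⟨k * x * y, h₁, by rwa [mul_mul_mul_mul_cancel_of_sq_eq_one hxy]⟩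
    exact ⟨g⁻¹ * k, QuotientGroup.eq.mp hgk, by rw [mul_inv_cancel_left]⟩
  · rintro ⟨a, ha, rfl⟩
    have hga : (QuotientGroup.mk (g * a) : Vertex y) = QuotientGroup.mk g :=
      QuotientGroup.mk_mul_of_mem g ha
    exact ⟨hga ▸ hloop (g * a), g * a, by rw [hga]⟩

theorem IsSimple.eq_of_endpoints_eq (hxy : (x * y) ^ 2 = 1) (hs : IsSimple x y) {g h : G}
    (h₁ : (QuotientGroup.mk g : Vertex y) = QuotientGroup.mk h)
    (h₂ : (QuotientGroup.mk (g * x * y) : Vertex y) = QuotientGroup.mk (h * x * y)) : g = h := by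
  have hedge := hs.2 g h (by rw [h₁, h₂])
  obtain ⟨k, hk : (x * y) ^ k = g⁻¹ * h⟩ := QuotientGroup.eq.mp hedge
  obtain rfl : h = g * (x * y) ^ k := by rw [hk, mul_inv_cancel_left]
  obtain ⟨l, rfl | rfl⟩ := Int.even_or_odd' k
  · rw [zpow_mul, zpow_ofNat, hxy, one_zpow, mul_one]
  · refine absurd h₁ ?_
    rw [zpow_add, zpow_mul, zpow_ofNat, hxy, one_zpow, one_mul, zpow_one, ← mul_assoc]
    exact hs.1 g

theorem IsSimple.card_adj (hxy : (x * y) ^ 2 = 1) (hs : IsSimple x y) (v : Vertex y) :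
    Nat.card {w : Vertex y // Adj x y v w} = orderOf y := by
  induction v using QuotientGroup.induction_on with | _ g =>
  let neighbor (a : Subgroup.zpowers y) : {w : Vertex y // Adj x y (QuotientGroup.mk g) w} :=
    ⟨QuotientGroup.mk (g * a * x * y), (adj_mk_iff hxy hs.1 g _).mpr ⟨a, a.2, rfl⟩⟩
  have hbij : Function.Bijective neighbor := by
    refine ⟨fun a b hab => ?_, fun ⟨w, hw⟩ => ?_⟩
    · refine Subtype.ext (mul_left_cancel (hs.eq_of_endpoints_eq hxy ?_ (congrArg Subtype.val hab)))
      rw [QuotientGroup.mk_mul_of_mem g a.2, QuotientGroup.mk_mul_of_mem g b.2]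
    · obtain ⟨a, ha, rfl⟩ := (adj_mk_iff hxy hs.1 g w).mp hw
      exact ⟨⟨a, ha⟩, rfl⟩
  rw [← Nat.card_congr (Equiv.ofBijective neighbor hbij), Nat.card_zpowers]

theorem isReflexive_of_monoidHom (hgen : Subgroup.closure {x, y} = ⊤) (φ : G →* G)
    (hx : φ x = x⁻¹) (hy : φ y = y⁻¹) : IsReflexive x y := by
  have hφ : φ.comp φ = MonoidHom.id G := by
    refine MonoidHom.eq_of_eqOn_dense hgen ?_
    rintro g (rfl | rfl) <;> simp [hx, hy]
  exact ⟨φ.toMulEquiv φ hφ hφ, hx, hy⟩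

end RegularMaps

/-- `x` and `y` satisfy the defining relations of the Fermat group `G_n`. -/
structure IsFermatPair_s19 (n : ℕ) (x y : G) : Prop where
  left_pow : x ^ 3 = 1
  right_pow : y ^ (2 * n) = 1
  mul_sq : (x * y) ^ 2 = 1
  commutator_pow : ⁅x, y⁆ ^ 3 = 1

theorem isFermatPair_iff_forall_lift_eq_one {n : ℕ} {x y : G} :
    IsFermatPair_s19 n x y ↔ ∀ r ∈ fermatRels n, FreeGroup.lift ![x, y] r = 1 := by
  simp only [fermatRels, Set.forall_mem_insert, Set.mem_singleton_iff, forall_eq,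
    map_mul, map_pow, map_inv, FreeGroup.lift_apply_of]
  exact ⟨fun h => ⟨h.1, h.2, h.3, h.4⟩, fun h => ⟨h.1, h.2.1, h.2.2.1, h.2.2.2⟩⟩

namespace IsFermatPair_s19

variable {n : ℕ} {x y : G}

theorem mul_eq_inv_mul_inv (h : IsFermatPair_s19 n x y) : x * y = y⁻¹ * x⁻¹ := by
  rw [← mul_inv_rev, eq_inv_iff_mul_eq_one, ← sq, h.mul_sq]

theorem mul_swap_eq_inv_mul_inv (h : IsFermatPair_s19 n x y) : y * x = x⁻¹ * y⁻¹ := by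
  rw [eq_inv_mul_iff_mul_eq, ← mul_assoc, h.mul_eq_inv_mul_inv, inv_mul_cancel_right]

theorem inv_mul_inv (h : IsFermatPair_s19 n x y) : x⁻¹ * x⁻¹ = x := by
  rw [← mul_inv_rev, inv_eq_iff_mul_eq_one, ← h.left_pow, pow_three']

protected theorem inv (h : IsFermatPair_s19 n x y) : IsFermatPair_s19 n x⁻¹ y⁻¹ where
  left_pow := by rw [inv_pow, h.left_pow, inv_one]
  right_pow := by rw [inv_pow, h.right_pow, inv_one]
  mul_sq := by
    have hconj : x⁻¹ * y⁻¹ = x⁻¹ * (x * y)⁻¹ * x⁻¹⁻¹ := by group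
    rw [hconj, conj_pow, inv_pow, h.mul_sq]
    group
  commutator_pow := by
    have hconj : ⁅x⁻¹, y⁻¹⁆ = (x * y)⁻¹ * ⁅x, y⁆ * (x * y)⁻¹⁻¹ := by
      simp only [commutatorElement_def]
      group
    rw [hconj, conj_pow, h.commutator_pow]
    group

theorem mul_sq_pow_three (h : IsFermatPair_s19 n x y) : (x * y ^ 2) ^ 3 = 1 := by
  have hconj : x * y ^ 2 = y⁻¹ * x⁻¹ * y⁻¹⁻¹ := by
    rw [inv_inv, sq, ← mul_assoc, h.mul_eq_inv_mul_inv]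
  rw [hconj, conj_pow, inv_pow, h.left_pow]
  group

theorem sq_mul_inv_pow_three (h : IsFermatPair_s19 n x y) : (y ^ 2 * x⁻¹) ^ 3 = 1 := by
  have hcomm : ⁅x, y⁆ = y⁻¹ * x * y⁻¹ := by
    rw [commutatorElement_def, h.mul_eq_inv_mul_inv, mul_assoc y⁻¹, h.inv_mul_inv]
  have hconj : y ^ 2 * x⁻¹ = y * ⁅x, y⁆⁻¹ * y⁻¹ := by
    rw [hcomm, sq]
    group
  rw [hconj, conj_pow, inv_pow, h.commutator_pow]
  group

theorem inv_conj_eq (h : IsFermatPair_s19 n x y) :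
    x⁻¹ * y ^ 2 * x = (x * y ^ 2 * x⁻¹)⁻¹ * (y ^ 2)⁻¹ := by
  have hBCA : x * y ^ 2 * x⁻¹ * (x⁻¹ * y ^ 2 * x) * y ^ 2 = 1 :=
    calc x * y ^ 2 * x⁻¹ * (x⁻¹ * y ^ 2 * x) * y ^ 2
        = x * y ^ 2 * (x⁻¹ * x⁻¹) * y ^ 2 * x * y ^ 2 := by simp only [mul_assoc]
      _ = (x * y ^ 2) ^ 3 := by rw [h.inv_mul_inv, pow_three']; simp only [mul_assoc]
      _ = 1 := h.mul_sq_pow_three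
  rw [eq_mul_inv_iff_mul_eq, eq_inv_iff_mul_eq_one, mul_eq_one_comm, ← mul_assoc, hBCA]

theorem inv_conj_eq' (h : IsFermatPair_s19 n x y) :
    x⁻¹ * y ^ 2 * x = (y ^ 2)⁻¹ * (x * y ^ 2 * x⁻¹)⁻¹ := by
  have hACB : y ^ 2 * (x⁻¹ * y ^ 2 * x) * (x * y ^ 2 * x⁻¹) = 1 :=
    calc y ^ 2 * (x⁻¹ * y ^ 2 * x) * (x * y ^ 2 * x⁻¹)
        = y ^ 2 * x⁻¹ * y ^ 2 * (x⁻¹ * x⁻¹)⁻¹ * y ^ 2 * x⁻¹ := by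
          simp only [mul_inv_rev, inv_inv, mul_assoc]
      _ = (y ^ 2 * x⁻¹) ^ 3 := by rw [h.inv_mul_inv, pow_three']; simp only [mul_assoc]
      _ = 1 := h.sq_mul_inv_pow_three
  rw [eq_mul_inv_iff_mul_eq, eq_inv_iff_mul_eq_one, mul_eq_one_comm, ← mul_assoc, hACB]

theorem commute_sq_conj (h : IsFermatPair_s19 n x y) : Commute (y ^ 2) (x * y ^ 2 * x⁻¹) :=
  Commute.inv_inv_iff.mp (h.inv_conj_eq'.symm.trans h.inv_conj_eq)

theorem semiconjBy_conj (h : IsFermatPair_s19 n x y) :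
    SemiconjBy y (x * y ^ 2 * x⁻¹) (x⁻¹ * y ^ 2 * x) := by
  have hyxy : y * x * y = x⁻¹ := by rw [h.mul_swap_eq_inv_mul_inv, inv_mul_cancel_right]
  calc y * (x * y ^ 2 * x⁻¹) = y * x * y * y * x⁻¹ := by simp only [sq, mul_assoc]
    _ = x⁻¹ * y * (y * x * y) := by rw [hyxy]
    _ = x⁻¹ * y ^ 2 * x * y := by simp only [sq, mul_assoc]

theorem conj_pow_eq_one (h : IsFermatPair_s19 n x y) : (x * y ^ 2 * x⁻¹) ^ n = 1 := by
  rw [conj_pow, ← pow_mul, h.right_pow, mul_one, mul_inv_cancel]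

section Action

variable {Ω : Type*} [MulAction G Ω] {o : Ω}

theorem inv_conj_zpow_smul (h : IsFermatPair_s19 n x y) (ho : y • o = o) (k : ℤ) :
    (x⁻¹ * y ^ 2 * x) ^ k • o = (x * y ^ 2 * x⁻¹) ^ (-k) • o := by
  have hAo : (y ^ 2)⁻¹ ^ k ∈ MulAction.stabilizer G o :=
    zpow_mem (inv_mem (pow_mem (MulAction.mem_stabilizer_iff.mpr ho) 2)) k
  rw [h.inv_conj_eq, h.commute_sq_conj.symm.inv_inv.mul_zpow, mul_smul,
    MulAction.mem_stabilizer_iff.mp hAo, inv_zpow']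

theorem smul_conj_zpow_smul (h : IsFermatPair_s19 n x y) (ho : y • o = o) (k : ℤ) :
    y • (x * y ^ 2 * x⁻¹) ^ k • o = (x * y ^ 2 * x⁻¹) ^ (-k) • o := by
  rw [← mul_smul, (h.semiconjBy_conj.zpow_right k).eq, mul_smul, ho, h.inv_conj_zpow_smul ho]

theorem inv_smul_conj_zpow_smul (h : IsFermatPair_s19 n x y) (ho : y • o = o) (k : ℤ) :
    y⁻¹ • (x * y ^ 2 * x⁻¹) ^ k • o = (x * y ^ 2 * x⁻¹) ^ (-k) • o := by
  rw [inv_smul_eq_iff, h.smul_conj_zpow_smul ho, neg_neg]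

theorem inv_conj_smul_conj_zpow_smul (h : IsFermatPair_s19 n x y) (ho : y • o = o) (k : ℤ) :
    (x⁻¹ * y ^ 2 * x) • (x * y ^ 2 * x⁻¹) ^ k • o = (x * y ^ 2 * x⁻¹) ^ (k - 1) • o := by
  have hCB : Commute (x⁻¹ * y ^ 2 * x) (x * y ^ 2 * x⁻¹) := by
    rw [h.inv_conj_eq]
    exact (Commute.refl _).inv_left.mul_left h.commute_sq_conj.inv_left
  have hCo := h.inv_conj_zpow_smul ho 1
  rw [zpow_one] at hCo
  rw [← mul_smul, (hCB.zpow_right k).eq, mul_smul, hCo, ← mul_smul, ← zpow_add, sub_eq_add_neg]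

end Action

end IsFermatPair_s19

/-- The rotation `(i, t) ↦ (i + 1, t)` about a triangular face of the complete tripartite graph
`K_{n,n,n}`, whose vertices are encoded as pairs (colour, label) with two vertices adjacent iff
their colours differ. -/
def tripartiteFaceRot (n : ℕ) : Equiv.Perm (Fin 3 × ZMod n) :=
  Equiv.prodCongr (Equiv.addRight 1) (Equiv.refl _)

/-- The rotation of `K_{n,n,n}` about its vertex `(0, 0)`: it fixes colour `0`, interchanges colours
`1` and `2`, and its square shifts the labels of the colours `0`, `1`, `2` by `0`, `-1`, `1`. -/
def tripartiteVertexRot (n : ℕ) : Equiv.Perm (Fin 3 × ZMod n) where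
  toFun v := ![(0, -v.2), (2, -v.2), (1, -v.2 - 1)] v.1
  invFun v := ![(0, -v.2), (2, -v.2 - 1), (1, -v.2)] v.1
  left_inv := by rintro ⟨i, t⟩; fin_cases i <;> simp
  right_inv := by rintro ⟨i, t⟩; fin_cases i <;> simp

section Tripartite

variable {n : ℕ}

@[simp]
theorem tripartiteFaceRot_apply (i : Fin 3) (t : ZMod n) :
    tripartiteFaceRot n (i, t) = (i + 1, t) :=
  rfl

@[simp]
theorem tripartiteFaceRot_symm_apply (i : Fin 3) (t : ZMod n) :
    (tripartiteFaceRot n).symm (i, t) = (i - 1, t) := by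
  rw [Equiv.symm_apply_eq, tripartiteFaceRot_apply, sub_add_cancel]

@[simp]
theorem tripartiteVertexRot_apply (i : Fin 3) (t : ZMod n) :
    tripartiteVertexRot n (i, t) = ![(0, -t), (2, -t), (1, -t - 1)] i :=
  rfl

@[simp]
theorem tripartiteVertexRot_symm_apply (i : Fin 3) (t : ZMod n) :
    (tripartiteVertexRot n).symm (i, t) = ![(0, -t), (2, -t - 1), (1, -t)] i :=
  rfl

theorem tripartiteVertexRot_sq_apply (i : Fin 3) (t : ZMod n) :
    (tripartiteVertexRot n ^ 2) (i, t) = (i, t + ![0, -1, 1] i) := by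
  fin_cases i <;> simp [sq, sub_eq_add_neg, add_comm]

theorem tripartiteVertexRot_sq_zpow_apply (k : ℤ) (i : Fin 3) (t : ZMod n) :
    ((tripartiteVertexRot n ^ 2) ^ k) (i, t) = (i, t + k * ![0, -1, 1] i) := by
  induction k generalizing t with
  | zero => simp
  | succ k ih =>
    rw [zpow_add_one, Equiv.Perm.mul_apply, tripartiteVertexRot_sq_apply, ih]
    push_cast
    ring_nf
  | pred k ih =>
    have hinv : (tripartiteVertexRot n ^ 2)⁻¹ (i, t) = (i, t - ![0, -1, 1] i) := by
      rw [Equiv.Perm.inv_eq_iff_eq, tripartiteVertexRot_sq_apply, sub_add_cancel]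
    rw [zpow_sub_one, Equiv.Perm.mul_apply, hinv, ih]
    push_cast
    ring_nf

theorem isFermatPair_tripartite (n : ℕ) :
    IsFermatPair_s19 n (tripartiteFaceRot n) (tripartiteVertexRot n) where
  left_pow := by
    ext ⟨i, t⟩ : 1
    fin_cases i <;> simp [pow_succ]
  right_pow := by
    ext ⟨i, t⟩ : 1
    simpa [pow_mul] using tripartiteVertexRot_sq_zpow_apply n i t
  mul_sq := by
    ext ⟨i, t⟩ : 1
    fin_cases i <;> simp [sq]
  commutator_pow := by
    ext ⟨i, t⟩ : 1
    fin_cases i <;> simp [pow_succ, commutatorElement_def]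

theorem tripartiteVertexRot_zpow_one_zero_eq_iff (k : ℤ) :
    (tripartiteVertexRot n ^ k) (1, 0) = (1, 0) ↔ ((2 * n : ℕ) : ℤ) ∣ k := by
  obtain ⟨l, rfl | rfl⟩ := Int.even_or_odd' k
  · rw [zpow_mul, zpow_ofNat, tripartiteVertexRot_sq_zpow_apply]
    simp [ZMod.intCast_zmod_eq_zero_iff_dvd, mul_dvd_mul_iff_left]
  · have hodd : ¬ (2 * n : ℤ) ∣ 2 * l + 1 := by
      rintro ⟨c, hc⟩
      grind
    rw [zpow_add, zpow_one, Equiv.Perm.mul_apply, zpow_mul, zpow_ofNat]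
    simp [tripartiteVertexRot_sq_zpow_apply, hodd]

theorem tripartiteFaceRot_pow_mul_conj_zpow_apply (i : Fin 3) (k : ℤ) :
    (tripartiteFaceRot n ^ (i : ℕ) *
      (tripartiteFaceRot n * tripartiteVertexRot n ^ 2 * (tripartiteFaceRot n)⁻¹) ^ k) (0, 0) =
      (i, (k : ZMod n)) := by
  have hbase : ((tripartiteFaceRot n * tripartiteVertexRot n ^ 2 * (tripartiteFaceRot n)⁻¹) ^ k)
      (0, 0) = (0, (k : ZMod n)) := by
    rw [conj_zpow]
    simp [tripartiteVertexRot_sq_zpow_apply]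
  rw [Equiv.Perm.mul_apply, hbase]
  fin_cases i <;> simp [sq]

end Tripartite

/-- The vertex `xⁱBᵗ • o`, with `B = xy²x⁻¹`, that corresponds to the vertex `(i, t)` of
`K_{n,n,n}` when `o` corresponds to `(0, 0)`; the integer representative of `t` is immaterial as
`Bⁿ = 1`. -/
def tripartiteOrbit {Ω : Type*} [MulAction G Ω] {n : ℕ} (x y : G) (o : Ω)
    (v : Fin 3 × ZMod n) : Ω :=
  x ^ (v.1 : ℕ) • (x * y ^ 2 * x⁻¹) ^ (v.2.cast : ℤ) • o

namespace IsFermatPair_s19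

variable {n : ℕ} {x y : G}

section Orbit

variable {Ω : Type*} [MulAction G Ω] {o : Ω}

theorem tripartiteOrbit_intCast (h : IsFermatPair_s19 n x y) (i : Fin 3) (k : ℤ) :
    tripartiteOrbit x y o (i, (k : ZMod n)) = x ^ (i : ℕ) • (x * y ^ 2 * x⁻¹) ^ k • o := by
  rw [tripartiteOrbit, ZMod.coe_intCast, ← zpow_eq_zpow_emod' k h.conj_pow_eq_one]

theorem tripartiteOrbit_faceRot (h : IsFermatPair_s19 n x y) (v : Fin 3 × ZMod n) :
    tripartiteOrbit x y o (tripartiteFaceRot n v) = x • tripartiteOrbit x y o v := by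
  obtain ⟨i, t⟩ := v
  simp only [tripartiteFaceRot_apply, tripartiteOrbit, ← mul_smul x, ← pow_succ']
  fin_cases i
  · rfl
  · rfl
  · simp [h.left_pow]

theorem tripartiteOrbit_vertexRot (h : IsFermatPair_s19 n x y) (ho : y • o = o)
    (v : Fin 3 × ZMod n) :
    tripartiteOrbit x y o (tripartiteVertexRot n v) = y • tripartiteOrbit x y o v := by
  obtain ⟨i, t⟩ := v
  obtain ⟨k, rfl⟩ := ZMod.intCast_surjective t
  have hx₂ : x ^ 2 = x⁻¹ := by rw [← h.inv.inv_mul_inv, inv_inv, sq]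
  fin_cases i
  · calc tripartiteOrbit x y o ((0, -k) : Fin 3 × ZMod n)
        = (x * y ^ 2 * x⁻¹) ^ (-k) • o := by
          rw [← Int.cast_neg, h.tripartiteOrbit_intCast, Fin.val_zero, pow_zero, one_smul]
      _ = y • (x * y ^ 2 * x⁻¹) ^ k • o := (h.smul_conj_zpow_smul ho k).symm
      _ = y • tripartiteOrbit x y o (0, (k : ZMod n)) := by
          rw [h.tripartiteOrbit_intCast, Fin.val_zero, pow_zero, one_smul]
  · calc tripartiteOrbit x y o ((2, -k) : Fin 3 × ZMod n)
        = x ^ 2 • (x * y ^ 2 * x⁻¹) ^ (-k) • o := by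
          rw [← Int.cast_neg, h.tripartiteOrbit_intCast, Fin.val_two]
      _ = x⁻¹ • y⁻¹ • (x * y ^ 2 * x⁻¹) ^ k • o := by rw [hx₂, h.inv_smul_conj_zpow_smul ho]
      _ = y • x • (x * y ^ 2 * x⁻¹) ^ k • o := by
          rw [← mul_smul, ← h.mul_swap_eq_inv_mul_inv, mul_smul]
      _ = y • tripartiteOrbit x y o (1, (k : ZMod n)) := by
          rw [h.tripartiteOrbit_intCast, Fin.val_one, pow_one]
  · have hyx : x * (x⁻¹ * y ^ 2 * x) * y = y * x⁻¹ := by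
      rw [← mul_assoc, mul_inv_cancel_left, mul_assoc, h.mul_eq_inv_mul_inv, sq,
        ← mul_assoc, mul_inv_cancel_right]
    calc tripartiteOrbit x y o ((1, -k - 1) : Fin 3 × ZMod n)
        = x • (x * y ^ 2 * x⁻¹) ^ (-k - 1) • o := by
          rw [← Int.cast_neg, ← Int.cast_one, ← Int.cast_sub, h.tripartiteOrbit_intCast,
            Fin.val_one, pow_one]
      _ = x • (x⁻¹ * y ^ 2 * x) • y • (x * y ^ 2 * x⁻¹) ^ k • o := by
          rw [h.smul_conj_zpow_smul ho, h.inv_conj_smul_conj_zpow_smul ho]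
      _ = y • x ^ 2 • (x * y ^ 2 * x⁻¹) ^ k • o := by
          rw [← mul_smul, ← mul_smul, hyx, hx₂, mul_smul]
      _ = y • tripartiteOrbit x y o (2, (k : ZMod n)) := by
          rw [h.tripartiteOrbit_intCast, Fin.val_two]

end Orbit

/-- The homomorphism from the Fermat group sending its generators `X`, `Y` to `x`, `y`. -/
def lift (h : IsFermatPair_s19 n x y) : PresentedGroup (fermatRels n) →* G :=
  PresentedGroup.toGroup (isFermatPair_iff_forall_lift_eq_one.mp h)

@[simp]
theorem lift_of_zero (h : IsFermatPair_s19 n x y) : h.lift (PresentedGroup.of 0) = x :=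
  PresentedGroup.toGroup.of _

@[simp]
theorem lift_of_one (h : IsFermatPair_s19 n x y) : h.lift (PresentedGroup.of 1) = y :=
  PresentedGroup.toGroup.of _

end IsFermatPair_s19

/-- The Fermat group `G_n`. -/
abbrev FermatGroup (n : ℕ) : Type :=
  PresentedGroup (fermatRels n)

namespace FermatGroup

/-- The generator `X` of `G_n`. -/
abbrev faceRot (n : ℕ) : FermatGroup n :=
  PresentedGroup.of 0

/-- The generator `Y` of `G_n`. -/
abbrev vertexRot (n : ℕ) : FermatGroup n :=
  PresentedGroup.of 1

theorem closure_eq_top (n : ℕ) : Subgroup.closure {faceRot n, vertexRot n} = ⊤ := by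
  rw [← PresentedGroup.closure_range_of (fermatRels n)]
  congr 1
  ext g
  simp [Fin.exists_fin_two, eq_comm]

theorem isFermatPair (n : ℕ) : IsFermatPair_s19 n (faceRot n) (vertexRot n) := by
  have hmk : FreeGroup.lift ![faceRot n, vertexRot n] = PresentedGroup.mk (fermatRels n) := by
    ext i
    fin_cases i <;> simp [PresentedGroup.of]
  rw [isFermatPair_iff_forall_lift_eq_one, hmk]
  exact fun r hr => PresentedGroup.one_of_mem hr

/-- The action of the Fermat group on the vertices of `K_{n,n,n}`. -/
instance (n : ℕ) : MulAction (FermatGroup n) (Fin 3 × ZMod n) :=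
  MulAction.compHom _ (isFermatPair_tripartite n).lift

variable {n : ℕ}

theorem smul_eq_lift_apply (g : FermatGroup n) (v : Fin 3 × ZMod n) :
    g • v = (isFermatPair_tripartite n).lift g v :=
  rfl

theorem faceRot_smul (v : Fin 3 × ZMod n) : faceRot n • v = tripartiteFaceRot n v := by
  rw [smul_eq_lift_apply, IsFermatPair_s19.lift_of_zero]

theorem vertexRot_zpow_smul (k : ℤ) (v : Fin 3 × ZMod n) :
    vertexRot n ^ k • v = (tripartiteVertexRot n ^ k) v := by
  rw [smul_eq_lift_apply, map_zpow, IsFermatPair_s19.lift_of_one]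

theorem vertexRot_smul (v : Fin 3 × ZMod n) : vertexRot n • v = tripartiteVertexRot n v := by
  rw [smul_eq_lift_apply, IsFermatPair_s19.lift_of_one]

theorem vertexRot_smul_base : vertexRot n • ((0, 0) : Fin 3 × ZMod n) = (0, 0) := by
  simp [vertexRot_smul]

theorem faceRot_mul_vertexRot_smul_base :
    (faceRot n * vertexRot n) • ((0, 0) : Fin 3 × ZMod n) = (1, 0) := by
  rw [mul_smul, vertexRot_smul_base, faceRot_smul, tripartiteFaceRot_apply, zero_add]

instance (n : ℕ) : MulAction.IsPretransitive (FermatGroup n) (Fin 3 × ZMod n) := by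
  refine (MulAction.isPretransitive_iff_base (0, 0)).mpr ?_
  rintro ⟨i, t⟩
  obtain ⟨k, rfl⟩ := ZMod.intCast_surjective t
  refine ⟨faceRot n ^ (i : ℕ) * (faceRot n * vertexRot n ^ 2 * (faceRot n)⁻¹) ^ k, ?_⟩
  simp only [smul_eq_lift_apply, map_mul, map_pow, map_zpow, map_inv, IsFermatPair_s19.lift_of_zero,
    IsFermatPair_s19.lift_of_one]
  exact tripartiteFaceRot_pow_mul_conj_zpow_apply i k

theorem tripartiteOrbit_smul {Ω : Type*} [MulAction (FermatGroup n) Ω] {o : Ω}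
    (ho : vertexRot n • o = o) (g : FermatGroup n) (v : Fin 3 × ZMod n) :
    tripartiteOrbit (faceRot n) (vertexRot n) o (g • v) =
      g • tripartiteOrbit (faceRot n) (vertexRot n) o v := by
  refine map_smul_of_closure_eq_top (closure_eq_top n) ?_ g v
  rintro _ (rfl | rfl) v
  · rw [faceRot_smul, (isFermatPair n).tripartiteOrbit_faceRot]
  · rw [vertexRot_smul, (isFermatPair n).tripartiteOrbit_vertexRot ho]

theorem stabilizer_base_eq_zpowers (n : ℕ) :
    MulAction.stabilizer (FermatGroup n) ((0, 0) : Fin 3 × ZMod n) =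
      Subgroup.zpowers (vertexRot n) := by
  refine le_antisymm (fun g hg => ?_) ?_
  · let o : Vertex (vertexRot n) := QuotientGroup.mk 1
    have ho : vertexRot n • o = o := QuotientGroup.eq.mpr (by simp)
    have hbase : tripartiteOrbit (faceRot n) (vertexRot n) o (0, (0 : ZMod n)) = o := by
      simp [tripartiteOrbit]
    have hgo : g • o = o :=
      calc g • o = tripartiteOrbit (faceRot n) (vertexRot n) o (g • (0, (0 : ZMod n))) := by
            rw [tripartiteOrbit_smul ho, hbase]
        _ = o := by rw [MulAction.mem_stabilizer_iff.mp hg, hbase]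
    simpa using QuotientGroup.eq.mp hgo.symm
  · exact Subgroup.zpowers_le.mpr vertexRot_smul_base

theorem orderOf_vertexRot (n : ℕ) : orderOf (vertexRot n) = 2 * n := by
  refine Nat.dvd_antisymm (orderOf_dvd_of_pow_eq_one (isFermatPair n).right_pow) ?_
  rw [← Int.natCast_dvd_natCast, ← tripartiteVertexRot_zpow_one_zero_eq_iff, ← vertexRot_zpow_smul,
    zpow_natCast, pow_orderOf_eq_one, one_smul]

theorem card_vertex (n : ℕ) : Nat.card (Vertex (vertexRot n)) = 3 * n := by
  rw [← Subgroup.index_eq_card, ← stabilizer_base_eq_zpowers,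
    MulAction.index_stabilizer_of_transitive, Nat.card_prod, Nat.card_zmod, Nat.card_fin]

theorem isSimple (n : ℕ) : IsSimple (faceRot n) (vertexRot n) := by
  refine isSimple_of_stabilizer_eq_zpowers (isFermatPair n).mul_sq (stabilizer_base_eq_zpowers n)
    (by simp [faceRot_mul_vertexRot_smul_base]) fun g hg hg' => ?_
  rw [← MulAction.mem_stabilizer_iff, stabilizer_base_eq_zpowers] at hg
  obtain ⟨k, rfl⟩ := hg
  rw [faceRot_mul_vertexRot_smul_base, vertexRot_zpow_smul,
    tripartiteVertexRot_zpow_one_zero_eq_iff, ← orderOf_vertexRot] at hg'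
  exact orderOf_dvd_iff_zpow_eq_one.mp hg'

theorem isReflexive (n : ℕ) : IsReflexive (faceRot n) (vertexRot n) :=
  isReflexive_of_monoidHom (closure_eq_top n) (isFermatPair n).inv.lift
    (IsFermatPair_s19.lift_of_zero _) (IsFermatPair_s19.lift_of_one _)

theorem card_eq (n : ℕ) : Nat.card (FermatGroup n) = 2 * n * (3 * n) := by
  rw [← (Subgroup.zpowers (vertexRot n)).card_mul_index, Nat.card_zpowers, orderOf_vertexRot,
    Subgroup.index_eq_card, card_vertex]

end FermatGroup

/-- `(G_n, X, Y)` encodes a simple reflexive regular map with `3n` vertices of degree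
`2n` and density 2/3. -/
theorem fermat_map_is_reflexive_regular (n : ℕ) (hn : 1 ≤ n)
    (X Y : PresentedGroup (fermatRels n))
    (hX : X = PresentedGroup.of 0) (hY : Y = PresentedGroup.of 1) :
    Subgroup.closure {X, Y} = ⊤ ∧
    (X * Y) ^ 2 = 1 ∧
    IsReflexive X Y ∧
    IsSimple X Y ∧
    Nat.card (Vertex Y) = 3 * n ∧
    (∀ v : Vertex Y, Nat.card {w : Vertex Y // Adj X Y v w} = 2 * n) ∧
    3 * orderOf Y ^ 2 = 2 * Nat.card (PresentedGroup (fermatRels n)) := by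
  subst hX hY
  refine ⟨FermatGroup.closure_eq_top n, (FermatGroup.isFermatPair n).mul_sq,
    FermatGroup.isReflexive n, FermatGroup.isSimple n, FermatGroup.card_vertex n, fun v => ?_, ?_⟩
  · rw [(FermatGroup.isSimple n).card_adj (FermatGroup.isFermatPair n).mul_sq,
      FermatGroup.orderOf_vertexRot]
  · rw [FermatGroup.orderOf_vertexRot, FermatGroup.card_eq]
    ring

end RegularMap
end
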